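/- arXiv:2002.12396 — 2 statements merged into one kernel-verified Lean document; each statement's English description precedes it below -/
import Mathlib

section
/- The n−1 inequalities characterizing total stability are minimal: for each single inequality among μ_{w,r}(X_k) > μ_{w,r}(X_{k+1}) (0 ≤ k < x(n)) and μ_{w,r}(Y_l) < μ_{w,r}(Y_{l+1}) (0 ≤ l < y(n)), there exists a point (w,r) ∈ ℝ^n × (ℝ_{>0})^n which satisfies all of the other n−2 inequalities but violates the chosen one. Consequently no proper subset of these n−1 inequalities defines TS(ε) as a subset of ℝ^n × (ℝ_{>0})^n. -/
/-!
The slopes of the sets `X_k` and `Y_l` can be prescribed arbitrarily up to a common shift of the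
`Y`-slopes, even with `r = 1`; hence the `n - 1` inequalities are independent.

Indeed each vertex lies in exactly one `X_k` and one `Y_l`, so vertices may be read as the edges of
a bipartite graph on the `x(n) + 1 + y(n) + 1 = n + 1` classes. This graph is a tree, so the
sums of `w` over the classes can be prescribed subject only to the two totals being equal
(`exists_weights`, by removing the last vertex, which is a leaf edge). The shift of the `Y`-slopes
serves to make the totals agree (`exists_slopes`). An inequality is then violated alone by
making the corresponding chain of slopes constant at that one step.
-/

open Finset

/-- The muSlope `μ_{w,r}(S) = (Σ_{z∈S} w z)/(Σ_{z∈S} r z)` of a subset of vertices. -/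
noncomputable def muSlope {n : ℕ} (w r : Fin n → ℝ) (S : Finset (Fin n)) : ℝ :=
  (∑ z ∈ S, w z) / (∑ z ∈ S, r z)

/-- `T` is an interval of vertices. -/
def IsInterval {n : ℕ} (T : Finset (Fin n)) : Prop :=
  ∃ a b : Fin n, T = Finset.Icc a b

/-- `S` is successor-closed in `T` with respect to the orientation `ε`
(`ε i = true` means there is an arrow `i → i+1`, `ε i = false` an arrow `i+1 → i`). -/
def SuccClosed {n : ℕ} (ε : ℕ → Bool) (T S : Finset (Fin n)) : Prop :=
  ∀ i j : Fin n, i ∈ T → j ∈ T → (j : ℕ) = (i : ℕ) + 1 →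
    ((ε (i : ℕ) = true → i ∈ S → j ∈ S) ∧ (ε (i : ℕ) = false → j ∈ S → i ∈ S))

/-- `(w, r)` is a total stability condition for the type `A_n` quiver with orientation `ε`. -/
def TotallyStable {n : ℕ} (ε : ℕ → Bool) (w r : Fin n → ℝ) : Prop :=
  ∀ T S : Finset (Fin n), IsInterval T → S ⊆ T → S.Nonempty → S ≠ T →
    SuccClosed ε T S → muSlope w r S < muSlope w r T

/-- `x`-coordinate of the vertex with `m` vertices before it: number of `→` arrows among
the first `m` arrows. -/
def xc (ε : ℕ → Bool) (m : ℕ) : ℕ := ((Finset.range m).filter (fun i => ε i = true)).card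

/-- `y`-coordinate: number of `←` arrows among the first `m` arrows. -/
def yc (ε : ℕ → Bool) (m : ℕ) : ℕ := ((Finset.range m).filter (fun i => ε i = false)).card

/-- `X_k`: the set of vertices with `x`-coordinate `k`. -/
def Xset {n : ℕ} (ε : ℕ → Bool) (k : ℕ) : Finset (Fin n) :=
  Finset.univ.filter (fun z => xc ε (z : ℕ) = k)

/-- `Y_k`: the set of vertices with `y`-coordinate `k`. -/
def Yset {n : ℕ} (ε : ℕ → Bool) (k : ℕ) : Finset (Fin n) :=
  Finset.univ.filter (fun z => yc ε (z : ℕ) = k)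

/-- `X̃_k`: the set of vertices with `x`-coordinate at least `k`. -/
def Xtil {n : ℕ} (ε : ℕ → Bool) (k : ℕ) : Finset (Fin n) :=
  Finset.univ.filter (fun z => k ≤ xc ε (z : ℕ))

/-- `Ỹ_k`: the set of vertices with `y`-coordinate at least `k`. -/
def Ytil {n : ℕ} (ε : ℕ → Bool) (k : ℕ) : Finset (Fin n) :=
  Finset.univ.filter (fun z => k ≤ yc ε (z : ℕ))

lemma xc_succ (ε : ℕ → Bool) (m : ℕ) : xc ε (m + 1) = xc ε m + if ε m = true then 1 else 0 := by
  unfold xc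
  rw [Finset.range_add_one, Finset.filter_insert]
  split_ifs <;> simp

lemma yc_succ (ε : ℕ → Bool) (m : ℕ) : yc ε (m + 1) = yc ε m + if ε m = true then 0 else 1 := by
  unfold yc
  rw [Finset.range_add_one, Finset.filter_insert]
  cases ε m <;> simp

lemma xc_mono (ε : ℕ → Bool) {a b : ℕ} (h : a ≤ b) : xc ε a ≤ xc ε b := by
  unfold xc
  gcongr

lemma yc_mono (ε : ℕ → Bool) {a b : ℕ} (h : a ≤ b) : yc ε a ≤ yc ε b := by
  unfold yc
  gcongr

/-- Inductive step of `exists_weights`, for a generic pair of coordinates `f, g` such that `f`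
jumps at the new vertex `m + 1` while `g` stays constant there: the new vertex alone carries the
new `f`-class, and its weight is compensated in its `g`-class. -/
lemma weights_step (f g : ℕ → ℕ) (m : ℕ) (hf : ∀ z ≤ m, f z ≤ f m)
    (hf' : f (m + 1) = f m + 1) (hg' : g (m + 1) = g m)
    (ih : ∀ A B : ℕ → ℝ, ∑ k ∈ range (f m + 1), A k = ∑ l ∈ range (g m + 1), B l →
      ∃ w : ℕ → ℝ, (∀ k ≤ f m, ∑ z ∈ range (m + 1), (if f z = k then w z else 0) = A k) ∧
        ∀ l ≤ g m, ∑ z ∈ range (m + 1), (if g z = l then w z else 0) = B l)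
    (A B : ℕ → ℝ)
    (h : ∑ k ∈ range (f (m + 1) + 1), A k = ∑ l ∈ range (g (m + 1) + 1), B l) :
    ∃ w : ℕ → ℝ, (∀ k ≤ f (m + 1),
        ∑ z ∈ range (m + 1 + 1), (if f z = k then w z else 0) = A k) ∧
      ∀ l ≤ g (m + 1), ∑ z ∈ range (m + 1 + 1), (if g z = l then w z else 0) = B l := by
  rw [hf', hg', sum_range_succ] at h
  obtain ⟨w, hA, hB⟩ := ih A (fun l => B l - if l = g m then A (f m + 1) else 0) (by
    rw [sum_sub_distrib, Finset.sum_ite_eq', if_pos (by simp)]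
    linarith)
  have key : ∀ (p : ℕ → ℕ) (k : ℕ),
      ∑ z ∈ range (m + 1), (if p z = k then Function.update w (m + 1) (A (f m + 1)) z else 0)
        = ∑ z ∈ range (m + 1), (if p z = k then w z else 0) := by
    intro p k
    refine sum_congr rfl fun z hz => ?_
    rw [Function.update_of_ne (by have := mem_range.1 hz; omega)]
  refine ⟨Function.update w (m + 1) (A (f m + 1)), fun k hk => ?_, fun l hl => ?_⟩
  · rw [sum_range_succ, key, Function.update_self, hf']
    rcases Nat.lt_or_ge (f m) k with h1 | h1
    · have hk' : k = f m + 1 := by omega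
      subst hk'
      rw [if_pos rfl, sum_eq_zero, zero_add]
      intro z hz
      have := hf z (by have := mem_range.1 hz; omega)
      rw [if_neg (by omega)]
    · rw [hA k h1, if_neg (by omega), add_zero]
  · rw [sum_range_succ, key, Function.update_self, hg', hB l (by omega)]
    by_cases e : l = g m
    · simp [e]
    · simp [e, Ne.symm e]

/-- Class sums over the `X_k` and `Y_l` can be prescribed as soon as their totals agree. -/
lemma exists_weights (ε : ℕ → Bool) (m : ℕ) : ∀ A B : ℕ → ℝ,
    ∑ k ∈ range (xc ε m + 1), A k = ∑ l ∈ range (yc ε m + 1), B l →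
      ∃ w : ℕ → ℝ,
        (∀ k ≤ xc ε m, ∑ z ∈ range (m + 1), (if xc ε z = k then w z else 0) = A k) ∧
        ∀ l ≤ yc ε m, ∑ z ∈ range (m + 1), (if yc ε z = l then w z else 0) = B l := by
  induction m with
  | zero =>
    intro A B h
    refine ⟨fun _ => A 0, ?_⟩
    simpa [xc, yc] using h
  | succ m ih =>
    intro A B h
    cases e : ε m
    · obtain ⟨w, h1, h2⟩ := weights_step (yc ε) (xc ε) m (fun z hz => yc_mono ε hz)
        (by simp [yc_succ, e]) (by simp [xc_succ, e])
        (fun A B h => by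
          obtain ⟨w, h1, h2⟩ := ih B A h.symm
          exact ⟨w, h2, h1⟩) B A h.symm
      exact ⟨w, h2, h1⟩
    · exact weights_step (xc ε) (yc ε) m (fun z hz => xc_mono ε hz)
        (by simp [xc_succ, e]) (by simp [yc_succ, e]) ih A B h

lemma sum_filter_fin (m : ℕ) (p : ℕ → ℕ) (k : ℕ) (w : ℕ → ℝ) :
    ∑ z ∈ univ.filter (fun z : Fin (m + 1) => p (z : ℕ) = k), w (z : ℕ)
      = ∑ z ∈ range (m + 1), (if p z = k then w z else 0) := by
  rw [sum_filter, Fin.sum_univ_eq_sum_range (fun z => if p z = k then w z else 0)]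

/-- Slopes of the `X_k` and `Y_l` can be prescribed, up to a common shift of the latter. -/
lemma exists_slopes (ε : ℕ → Bool) (m : ℕ) (a b : ℕ → ℝ) :
    ∃ (w r : Fin (m + 1) → ℝ) (c : ℝ), (∀ i, 0 < r i) ∧
      (∀ k ≤ xc ε m, muSlope w r (Xset ε k) = a k) ∧
      ∀ l ≤ yc ε m, muSlope w r (Yset ε l) = b l + c := by
  set cX : ℕ → ℝ := fun k => ∑ z ∈ range (m + 1), (if xc ε z = k then 1 else 0) with hcX
  set cY : ℕ → ℝ := fun l => ∑ z ∈ range (m + 1), (if yc ε z = l then 1 else 0) with hcY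
  -- A class of size zero would have weight sum zero, but its weight sum can be prescribed to be 1.
  have hX : ∀ k ≤ xc ε m, cX k ≠ 0 := by
    intro k hk h0
    obtain ⟨w, h1, -⟩ := exists_weights ε m (fun i => if i = k then 1 else 0)
      (fun i => if i = 0 then 1 else 0) (by simp [Finset.sum_ite_eq', hk])
    have h2 := h1 k hk
    rw [hcX, sum_eq_zero_iff_of_nonneg (fun z _ => by positivity)] at h0
    rw [sum_eq_zero] at h2
    · simp at h2
    · intro z hz
      have := h0 z hz
      simp_all
  have hY : ∀ l ≤ yc ε m, cY l ≠ 0 := by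
    intro k hk h0
    obtain ⟨w, -, h1⟩ := exists_weights ε m (fun i => if i = 0 then 1 else 0)
      (fun i => if i = k then 1 else 0) (by simp [Finset.sum_ite_eq', hk])
    have h2 := h1 k hk
    rw [hcY, sum_eq_zero_iff_of_nonneg (fun z _ => by positivity)] at h0
    rw [sum_eq_zero] at h2
    · simp at h2
    · intro z hz
      have := h0 z hz
      simp_all
  have hS : 0 < ∑ l ∈ range (yc ε m + 1), cY l := by
    refine sum_pos (fun l hl => ?_) (by simp)
    exact lt_of_le_of_ne (sum_nonneg fun z _ => by positivity)
      (hY l (by have := mem_range.1 hl; omega)).symm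
  -- The shift that equalizes the two totals.
  set c : ℝ := (∑ k ∈ range (xc ε m + 1), a k * cX k - ∑ l ∈ range (yc ε m + 1), b l * cY l)
    / ∑ l ∈ range (yc ε m + 1), cY l with hc
  obtain ⟨w, h1, h2⟩ := exists_weights ε m (fun k => a k * cX k) (fun l => (b l + c) * cY l) (by
    simp only [add_mul, sum_add_distrib]
    rw [← mul_sum, hc, div_mul_cancel₀ _ hS.ne']
    ring)
  refine ⟨fun z => w z, fun _ => 1, c, fun _ => one_pos, fun k hk => ?_, fun l hl => ?_⟩
  · unfold muSlope Xset
    rw [sum_filter_fin m (xc ε) k w, sum_filter_fin m (xc ε) k (fun _ => 1), h1 k hk]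
    exact mul_div_cancel_right₀ _ (hX k hk)
  · unfold muSlope Yset
    rw [sum_filter_fin m (yc ε) l w, sum_filter_fin m (yc ε) l (fun _ => 1), h2 l hl]
    exact mul_div_cancel_right₀ _ (hY l hl)

/-- minimality of the `n-1` inequalities: for each single inequality among
`μ(X_k) > μ(X_{k+1})` (`0 ≤ k < x(n)`) and `μ(Y_l) < μ(Y_{l+1})` (`0 ≤ l < y(n)`),
there is a stability condition `(w,r)` satisfying all the other `n-2` inequalities
but violating the chosen one. -/
theorem chain_inequalities_minimal (n : ℕ) (hn : 0 < n) (ε : ℕ → Bool) :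
    (∀ k, k < xc ε (n - 1) →
      ∃ (w r : Fin n → ℝ), (∀ i, 0 < r i) ∧
        (∀ k', k' < xc ε (n - 1) → k' ≠ k →
          muSlope w r (Xset ε (k' + 1)) < muSlope w r (Xset ε k')) ∧
        (∀ l, l < yc ε (n - 1) →
          muSlope w r (Yset ε l) < muSlope w r (Yset ε (l + 1))) ∧
        ¬ (muSlope w r (Xset ε (k + 1)) < muSlope w r (Xset ε k))) ∧
    (∀ l, l < yc ε (n - 1) →
      ∃ (w r : Fin n → ℝ), (∀ i, 0 < r i) ∧
        (∀ k, k < xc ε (n - 1) →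
          muSlope w r (Xset ε (k + 1)) < muSlope w r (Xset ε k)) ∧
        (∀ l', l' < yc ε (n - 1) → l' ≠ l →
          muSlope w r (Yset ε l') < muSlope w r (Yset ε (l' + 1))) ∧
        ¬ (muSlope w r (Yset ε l) < muSlope w r (Yset ε (l + 1)))) := by
  obtain ⟨m, rfl⟩ : ∃ m, n = m + 1 := ⟨n - 1, by omega⟩
  simp only [Nat.add_sub_cancel]
  refine ⟨fun k hk => ?_, fun l hl => ?_⟩
  · obtain ⟨w, r, c, hr, hx, hy⟩ := exists_slopes ε m
      (fun i => -(i : ℝ) + if k < i then 1 else 0) (fun i => (i : ℝ))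
    refine ⟨w, r, hr, fun k' hk' hne => ?_, fun l hl => ?_, ?_⟩
    · rw [hx _ (by omega), hx _ (by omega)]
      have : k < k' + 1 ↔ k < k' := by omega
      simp only [this]
      push_cast
      linarith
    · rw [hy _ (by omega), hy _ (by omega)]
      push_cast
      linarith
    · rw [hx _ (by omega), hx _ (by omega)]
      simp
  · obtain ⟨w, r, c, hr, hx, hy⟩ := exists_slopes ε m
      (fun i => -(i : ℝ)) (fun i => (i : ℝ) - if l < i then 1 else 0)
    refine ⟨w, r, hr, fun k hk => ?_, fun l' hl' hne => ?_, ?_⟩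
    · rw [hx _ (by omega), hx _ (by omega)]
      push_cast
      linarith
    · rw [hy _ (by omega), hy _ (by omega)]
      have : l < l' + 1 ↔ l < l' := by omega
      simp only [this]
      push_cast
      linarith
    · rw [hy _ (by omega), hy _ (by omega)]
      simp
end

section
/- (Stability can be checked on indecomposable subrepresentations, type A case.) Fix an orientation ε of the type A_n quiver, (w,r) ∈ ℝ^n × (ℝ_{>0})^n, and an interval T ⊆ {1,…,n}. If μ_{w,r}(I) < μ_{w,r}(T) for every nonempty proper successor-closed subset I ⊊ T which is itself an interval, then μ_{w,r}(S) < μ_{w,r}(T) for every nonempty proper successor-closed subset S ⊊ T. -/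
/-! A successor-closed set `S` is the disjoint union of its connected components, each of which
is a successor-closed interval. Since `r > 0`, the inequality `μ(S) < μ(T)` says that the additive
function `S ↦ Σ_{z ∈ S} (w z - μ(T) r z)` is negative at `S`; it is negative on each component by
hypothesis, hence on `S`. The components are split off one at a time, leftmost first
(`exists_first_component`), by strong induction on `S` under strict inclusion. -/

open Finset

theorem muSlope_lt_iff {n : ℕ} (w r : Fin n → ℝ) (hr : ∀ i, 0 < r i) (S : Finset (Fin n))
    (hS : S.Nonempty) (m : ℝ) :
    muSlope w r S < m ↔ ∑ z ∈ S, (w z - m * r z) < 0 := by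
  have hpos : 0 < ∑ z ∈ S, r z := Finset.sum_pos (fun i _ => hr i) hS
  rw [muSlope, div_lt_iff₀ hpos, Finset.sum_sub_distrib, ← Finset.mul_sum, sub_neg]

/-- The leftmost connected component `I` of a nonempty set `S`. The last condition, that two
adjacent elements of `S` are both in `I` or both outside it, is what makes `I` and `S \ I` inherit
successor-closedness from `S`. -/
theorem exists_first_component {n : ℕ} (S : Finset (Fin n)) (hS : S.Nonempty) :
    ∃ I : Finset (Fin n), IsInterval I ∧ I.Nonempty ∧ I ⊆ S ∧
      ∀ i j : Fin n, i ∈ S → j ∈ S → (j : ℕ) = (i : ℕ) + 1 → (i ∈ I ↔ j ∈ I) := by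
  set a := S.min' hS with ha
  have haS : a ∈ S := S.min'_mem hS
  -- The right end of the component is the largest `b` with `[a, b] ⊆ S`.
  set B := Finset.univ.filter (fun b : Fin n => a ≤ b ∧ Finset.Icc a b ⊆ S) with hB
  have haB : a ∈ B := by simp [hB, haS]
  set b := B.max' ⟨a, haB⟩ with hb
  have hbB : b ∈ B := B.max'_mem ⟨a, haB⟩
  obtain ⟨hab, hsub⟩ : a ≤ b ∧ Finset.Icc a b ⊆ S := by simpa [hB] using hbB
  refine ⟨Finset.Icc a b, ⟨a, b, rfl⟩, Finset.nonempty_Icc.2 hab, hsub, ?_⟩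
  intro i j hi hj hij
  have hai : a ≤ i := S.min'_le i hi
  have haj : a ≤ j := S.min'_le j hj
  simp only [Finset.mem_Icc, hai, haj, true_and]
  constructor
  · intro hib
    refine B.le_max' j ?_
    simp only [hB, Finset.mem_filter, Finset.mem_univ, true_and]
    refine ⟨haj, fun x hx => ?_⟩
    rw [Finset.mem_Icc] at hx
    by_cases hxj : x = j
    · exact hxj ▸ hj
    · exact hsub (Finset.mem_Icc.2 ⟨hx.1, by
        have : (x : ℕ) ≠ j := fun h => hxj (Fin.ext h)
        have h2 := hx.2
        simp only [Fin.le_def] at *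
        omega⟩)
  · intro hjb
    simp only [Fin.le_def] at *
    omega

/-- stability can be checked on indecomposable (interval) subrepresentations:
if `μ(I) < μ(T)` for all nonempty proper successor-closed *interval* subsets `I ⊊ T`,
then `μ(S) < μ(T)` for all nonempty proper successor-closed subsets `S ⊊ T`. -/
theorem stable_of_interval_subreps (n : ℕ) (hn : 0 < n) (ε : ℕ → Bool)
    (w r : Fin n → ℝ) (hr : ∀ i, 0 < r i) (T : Finset (Fin n)) (hT : IsInterval T)
    (h : ∀ I : Finset (Fin n), IsInterval I → I ⊆ T → I.Nonempty → I ≠ T →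
      SuccClosed ε T I → muSlope w r I < muSlope w r T) :
    ∀ S : Finset (Fin n), S ⊆ T → S.Nonempty → S ≠ T →
      SuccClosed ε T S → muSlope w r S < muSlope w r T := by
  intro S
  induction S using Finset.strongInduction with
  | H S ih =>
    intro hST hS hne hcl
    obtain ⟨I, hI, hIne, hIS, hadj⟩ := exists_first_component S hS
    have hIT : I ≠ T := fun e => hne (hST.antisymm (e ▸ hIS))
    have hIcl : SuccClosed ε T I := fun i j hi hj hij =>
      ⟨fun he hiI => (hadj i j (hIS hiI) ((hcl i j hi hj hij).1 he (hIS hiI)) hij).1 hiI,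
        fun he hjI => (hadj i j ((hcl i j hi hj hij).2 he (hIS hjI)) (hIS hjI) hij).2 hjI⟩
    have hμI := h I hI (hIS.trans hST) hIne hIT hIcl
    rcases (S \ I).eq_empty_or_nonempty with hemp | hRne
    · have hSI : S = I := (Finset.sdiff_eq_empty_iff_subset.1 hemp).antisymm hIS
      rwa [hSI]
    · have hRS : S \ I ⊂ S := Finset.sdiff_ssubset hIS hIne
      have hRcl : SuccClosed ε T (S \ I) := by
        intro i j hi hj hij
        simp only [Finset.mem_sdiff]
        refine ⟨fun he hiR => ?_, fun he hjR => ?_⟩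
        · have hjS := (hcl i j hi hj hij).1 he hiR.1
          exact ⟨hjS, fun hjI => hiR.2 ((hadj i j hiR.1 hjS hij).2 hjI)⟩
        · have hiS := (hcl i j hi hj hij).2 he hjR.1
          exact ⟨hiS, fun hiI => hjR.2 ((hadj i j hiS hjR.1 hij).1 hiI)⟩
      have hRT : S \ I ≠ T := (hRS.trans_subset hST).ne
      have hμR := ih (S \ I) hRS (hRS.subset.trans hST) hRne hRT hRcl
      rw [muSlope_lt_iff w r hr _ hIne] at hμI
      rw [muSlope_lt_iff w r hr _ hRne] at hμR
      rw [muSlope_lt_iff w r hr _ hS, ← Finset.sum_sdiff hIS]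
      exact add_neg hμR hμI
end
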